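/- arXiv:1201.1818 — 2 statements merged into one kernel-verified Lean document; each statement's English description precedes it below -/
import Mathlib

section
/- Let (M,d) be a metric space with a σ-finite Borel measure μ, let m ≥ 1, 1 ≤ p < ∞, and write X = L^p(μ; ℂ^m). Let D : Dom(D) ⊆ X → X be a densely defined linear operator and let V : ℝ → B(X) be a C₀ group generated by iD satisfying ‖V(t)u‖_p ≤ c·e^{ω|t|}·‖u‖_p for all t ∈ ℝ and u ∈ X, for some constants c ≥ 1 and ω ≥ 0. Suppose there is a constant κ > 0 such that for every bounded Lipschitz function η : M → ℝ and every u ∈ Dom(D): (i) η·u ∈ Dom(D); (ii) ‖η·(Du) − D(η·u)‖_p ≤ κ·Lip(η)·‖u‖_p; and (iii) η²·(Du) − 2η·D(η·u) + D(η²·u) = 0 in X (i.e. the double commutator [M_η,[M_η,D]] vanishes). Then the group V has finite propagation speed at most cκ: for every closed set K ⊆ M, every u ∈ X with u = 0 μ-a.e. on M∖K, and every t ∈ ℝ, one has V(t)u = 0 μ-a.e. on the set {x ∈ M : dist(x,K) > cκ|t|}. -/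
open MeasureTheory Complex

/-!
Let `a` be a bounded multiplication operator, `A` the generator, and `B = [a, A]`. Since `B`
commutes with `a`, the iterated commutators `W n t = [a, [a, …, [a, V t]]]` satisfy
`(W (n + 1))' = W (n + 1) A + (n + 1) W n B`. Duhamel's formula then yields
`‖W n t‖ ≤ c exp(ω|t|) (cκ|t|) ^ n` by induction on `n`: the factor `n + 1` cancels against the
integral of `s ^ n`, so no factorial accumulates. If `a u = 0` then `a ^ n (V t u) = W n t u`.
With `a` multiplication by a truncation of the distance to `K`, letting `n → ∞` confines `V t u`
to the points where this distance is at most `cκ|t|`.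
-/

section IteratedCommutator

variable {R : Type*} [Ring R] (a x : R) (n : ℕ)

/-- The `n`-fold commutator `[a, [a, …, [a, x]]]`, used with `x` a member of the group. -/
def iteratedCommutator : R := (⁅a, ·⁆)^[n] x

@[simp]
theorem iteratedCommutator_zero : iteratedCommutator a x 0 = x := rfl

theorem iteratedCommutator_succ :
    iteratedCommutator a x (n + 1) =
      a * iteratedCommutator a x n - iteratedCommutator a x n * a := by
  rw [iteratedCommutator, Function.iterate_succ_apply', Ring.lie_def, iteratedCommutator]

theorem iteratedCommutator_one_succ : iteratedCommutator a 1 (n + 1) = 0 := by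
  induction n with
  | zero => simp [iteratedCommutator_succ]
  | succ n ih => simp [iteratedCommutator_succ a 1 (n + 1), ih]

end IteratedCommutator

section StronglyContinuous

open Filter Topology

variable {𝕜 E F : Type*} [NontriviallyNormedField 𝕜] [NormedAddCommGroup E] [NormedSpace 𝕜 E]
  [NormedAddCommGroup F] [NormedSpace 𝕜 F]

theorem continuous_uncurry_apply_of_norm_apply_le {T : Type*} [TopologicalSpace T]
    {U : T → E →L[𝕜] F} {g : T → ℝ} (hg : Continuous g) (hU : ∀ u, Continuous fun t => U t u)
    (hle : ∀ t u, ‖U t u‖ ≤ g t * ‖u‖) : Continuous fun q : T × E => U q.1 q.2 := by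
  refine continuous_iff_continuousAt.2 fun ⟨t, u⟩ => ?_
  have hsmall : Tendsto (fun q : T × E => U q.1 (q.2 - u)) (𝓝 (t, u)) (𝓝 0) := by
    refine squeeze_zero_norm (fun q => hle q.1 (q.2 - u)) ?_
    have : Continuous fun q : T × E => g q.1 * ‖q.2 - u‖ := by fun_prop
    simpa using this.tendsto (t, u)
  have horbit : Tendsto (fun q : T × E => U q.1 u) (𝓝 (t, u)) (𝓝 (U t u)) :=
    ((hU u).comp continuous_fst).tendsto (t, u)
  simpa [ContinuousAt] using hsmall.add horbit

theorem hasDerivAt_apply_of_continuous_uncurry {U : 𝕜 → E →L[𝕜] F}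
    (hU : Continuous fun q : 𝕜 × E => U q.1 q.2) {w : 𝕜 → E} {w' : E} {d : F} {s : 𝕜}
    (hw : HasDerivAt w w' s) (hd : HasDerivAt (fun r => U r (w s)) d s) :
    HasDerivAt (fun r => U r (w r)) (U s w' + d) s := by
  rw [hasDerivAt_iff_tendsto_slope] at hw hd ⊢
  have hid : Tendsto (fun r : 𝕜 => r) (𝓝[≠] s) (𝓝 s) := nhdsWithin_le_nhds
  refine (((hU.tendsto (s, w')).comp (hid.prodMk_nhds hw)).add hd).congr fun r => ?_
  simp only [Function.comp_apply, slope_def_module, map_smul, map_sub, ← smul_add,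
    sub_add_sub_cancel]

end StronglyContinuous

section Commutator

variable {𝕜 E : Type*} [NontriviallyNormedField 𝕜] [NormedAddCommGroup E] [NormedSpace 𝕜 E]

/-- The hypotheses (i)–(iii) on a bounded operator `a` and the generator `A` with domain `S`: `a`
preserves `S`, and `[a, A]` is bounded by `κ` and commutes with `a`. Only the values of `A` on `S`
matter. -/
def HasCommutatorBound (A : E → E) (S : Submodule 𝕜 E) (a : E →L[𝕜] E) (κ : ℝ) : Prop :=
  ∀ u ∈ S, a u ∈ S ∧ ‖a (A u) - A (a u)‖ ≤ κ * ‖u‖ ∧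
    a (a (A u)) - (2 : 𝕜) • a (A (a u)) + A (a (a u)) = 0

variable {A : E → E} {S : Submodule 𝕜 E} {a : E →L[𝕜] E} {κ : ℝ}

theorem HasCommutatorBound.const_smul (h : HasCommutatorBound A S a κ) (z : 𝕜) :
    HasCommutatorBound (z • A) S a (‖z‖ * κ) := fun u hu => by
  obtain ⟨hmem, hle, hdouble⟩ := h u hu
  refine ⟨hmem, ?_, ?_⟩
  · simp only [Pi.smul_apply, map_smul, ← smul_sub, norm_smul, mul_assoc]
    gcongr
  · rw [← smul_zero z, ← hdouble]
    simp only [Pi.smul_apply, map_smul]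
    module

theorem HasCommutatorBound.neg (h : HasCommutatorBound A S a κ) :
    HasCommutatorBound (-A) S a κ := by
  simpa using h.const_smul (-1)

theorem HasCommutatorBound.map_commutator (h : HasCommutatorBound A S a κ) {u : E} (hu : u ∈ S) :
    a (a (A u) - A (a u)) = a (A (a u)) - A (a (a u)) := by
  rw [← sub_eq_zero, ← (h u hu).2.2, map_sub]
  module

theorem iteratedCommutator_succ_apply (T : E →L[𝕜] E) (n : ℕ) (u : E) :
    iteratedCommutator a T (n + 1) u =
      a (iteratedCommutator a T n u) - iteratedCommutator a T n (a u) := by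
  simp [iteratedCommutator_succ]

theorem iteratedCommutator_apply_of_apply_eq_zero (T : E →L[𝕜] E) {u : E} (hu : a u = 0) (n : ℕ) :
    iteratedCommutator a T n u = (a ^ n) (T u) := by
  induction n with
  | zero => simp
  | succ n ih => simp [iteratedCommutator_succ_apply, ih, hu, pow_succ']

theorem continuous_uncurry_iteratedCommutator_apply {T : Type*} [TopologicalSpace T]
    {U : T → E →L[𝕜] E} (hU : Continuous fun q : T × E => U q.1 q.2) (n : ℕ) :
    Continuous fun q : T × E => iteratedCommutator a (U q.1) n q.2 := by
  induction n with
  | zero => simpa using hU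
  | succ n ih =>
    simp only [iteratedCommutator_succ_apply]
    exact (a.continuous.comp ih).sub
      (ih.comp (continuous_fst.prodMk (a.continuous.comp continuous_snd)))

end Commutator

section Group

variable {𝕜 E : Type*} [RCLike 𝕜] [NormedAddCommGroup E] [NormedSpace ℝ E] [NormedSpace 𝕜 E]

/-- `V` is a C₀ group whose generator extends `A`, with domain the `V`-invariant subspace `S`. The
unbounded operator `A` is encoded as a function on all of `E`, of which only the values on `S`
matter; it is linear there, being given by derivatives of orbits. -/
structure IsC0Group (V : ℝ → E →L[𝕜] E) (A : E → E) (S : Submodule 𝕜 E) : Prop where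
  protected map_zero : V 0 = ContinuousLinearMap.id 𝕜 E
  protected map_add : ∀ s t, V (s + t) = (V s).comp (V t)
  continuous_apply : ∀ u, Continuous fun t => V t u
  apply_mem : ∀ t, ∀ u ∈ S, V t u ∈ S
  hasDerivAt_zero : ∀ u ∈ S, HasDerivAt (fun t => V t u) (A u) 0

variable {V : ℝ → E →L[𝕜] E} {A : E → E} {S : Submodule 𝕜 E} {a : E →L[𝕜] E} {c ω κ : ℝ}

namespace IsC0Group

theorem neg (hV : IsC0Group V A S) : IsC0Group (fun t => V (-t)) (-A) S where
  map_zero := by simpa using hV.map_zero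
  map_add s t := by rw [neg_add, hV.map_add]
  continuous_apply u := (hV.continuous_apply u).comp continuous_neg
  apply_mem t := hV.apply_mem (-t)
  hasDerivAt_zero u hu := by
    simpa using HasDerivAt.comp_const_sub (0 : ℝ) 0 (by simpa using hV.hasDerivAt_zero u hu)

variable [IsScalarTower ℝ 𝕜 E]

theorem hasDerivAt (hV : IsC0Group V A S) (t : ℝ) {u : E} (hu : u ∈ S) :
    HasDerivAt (fun s => V s u) (V t (A u)) t := by
  have h := ((V t).restrictScalars ℝ).hasFDerivAt.comp_hasDerivAt t
    (HasDerivAt.comp_sub_const t t (by simpa using hV.hasDerivAt_zero u hu))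
  refine h.congr_of_eventuallyEq (.of_forall fun s => ?_)
  simp [← ContinuousLinearMap.comp_apply, ← hV.map_add]

theorem apply_generator (hV : IsC0Group V A S) (t : ℝ) {u : E} (hu : u ∈ S) :
    V t (A u) = A (V t u) := by
  have hleft : HasDerivAt (fun s => V (s + t) u) (V t (A u)) 0 :=
    HasDerivAt.comp_add_const (f := fun s => V s u) 0 t (by simpa using hV.hasDerivAt t hu)
  have hright : HasDerivAt (fun s => V (s + t) u) (A (V t u)) 0 := by
    simpa [hV.map_add] using hV.hasDerivAt_zero _ (hV.apply_mem t u hu)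
  exact hleft.unique hright

theorem hasDerivAt_iteratedCommutator_succ (hV : IsC0Group V A S)
    (ha : HasCommutatorBound A S a κ) (n : ℕ) (t : ℝ) {u : E} (hu : u ∈ S) :
    HasDerivAt (fun s => iteratedCommutator a (V s) (n + 1) u)
      (iteratedCommutator a (V t) (n + 1) (A u) +
        (n + 1) • iteratedCommutator a (V t) n (a (A u) - A (a u))) t := by
  have hcomm {T : ℝ → E →L[𝕜] E} {u d d' : E} (hd : HasDerivAt (fun s => T s u) d t)
      (hd' : HasDerivAt (fun s => T s (a u)) d' t) :
      HasDerivAt (fun s => a (T s u) - T s (a u)) (a d - d') t :=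
    ((a.restrictScalars ℝ).hasFDerivAt.comp_hasDerivAt t hd).sub hd'
  induction n generalizing u with
  | zero =>
    simp only [iteratedCommutator_succ_apply]
    refine (hcomm (hV.hasDerivAt t hu) (hV.hasDerivAt t (ha u hu).1)).congr_deriv ?_
    simp only [iteratedCommutator_zero, zero_add, one_smul, map_sub]
    abel
  | succ n ih =>
    simp only [iteratedCommutator_succ_apply (n := n + 1)]
    refine (hcomm (ih hu) (ih (ha u hu).1)).congr_deriv ?_
    have hB : iteratedCommutator a (V t) (n + 1) (a (A u)) -
        iteratedCommutator a (V t) (n + 1) (A (a u)) =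
        a (iteratedCommutator a (V t) n (a (A u) - A (a u))) -
          iteratedCommutator a (V t) n (a (a (A u) - A (a u))) := by
      rw [← map_sub, iteratedCommutator_succ_apply]
    rw [← ha.map_commutator hu, map_add, map_nsmul, eq_add_of_sub_eq hB,
      iteratedCommutator_succ_apply _ n (a (A u) - A (a u))]
    module

theorem hasDerivAt_iteratedCommutator_succ_apply_sub (hV : IsC0Group V A S)
    (hjoint : Continuous fun q : ℝ × E => V q.1 q.2)
    (ha : HasCommutatorBound A S a κ) (n : ℕ) (t s : ℝ) {u : E} (hu : u ∈ S) :
    HasDerivAt (fun r => iteratedCommutator a (V r) (n + 1) (V (t - r) u))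
      ((n + 1) • iteratedCommutator a (V s) n
        (a (A (V (t - s) u)) - A (a (V (t - s) u)))) s := by
  have h := hasDerivAt_apply_of_continuous_uncurry
    (U := fun r => (iteratedCommutator a (V r) (n + 1)).restrictScalars ℝ)
    (continuous_uncurry_iteratedCommutator_apply hjoint (n + 1))
    (HasDerivAt.comp_const_sub t s (hV.hasDerivAt (t - s) hu))
    (hV.hasDerivAt_iteratedCommutator_succ ha n s (hV.apply_mem (t - s) u hu))
  simpa [hV.apply_generator (t - s) hu] using h

theorem norm_iteratedCommutator_succ_le (hV : IsC0Group V A S) (hc : 0 ≤ c) (hκ : 0 ≤ κ)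
    (hbound : ∀ t u, ‖V t u‖ ≤ c * Real.exp (ω * |t|) * ‖u‖)
    (ha : HasCommutatorBound A S a κ) (n : ℕ)
    (ih : ∀ s, 0 ≤ s → ∀ v, ‖iteratedCommutator a (V s) n v‖ ≤
      c * Real.exp (ω * s) * (c * κ * s) ^ n * ‖v‖)
    {t : ℝ} (ht : 0 ≤ t) {u : E} (hu : u ∈ S) :
    ‖iteratedCommutator a (V t) (n + 1) u‖ ≤
      c * Real.exp (ω * t) * (c * κ * t) ^ (n + 1) * ‖u‖ := by
  have hjoint : Continuous fun q : ℝ × E => V q.1 q.2 :=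
    continuous_uncurry_apply_of_norm_apply_le (by fun_prop) hV.continuous_apply hbound
  have hderiv s := hV.hasDerivAt_iteratedCommutator_succ_apply_sub hjoint ha n t s hu
  set C : ℝ := c * Real.exp (ω * t) * (c * κ) ^ (n + 1) * ‖u‖ with hC
  have hderiv_le : ∀ s ∈ Set.Ico 0 t, ‖(n + 1) • iteratedCommutator a (V s) n
      (a (A (V (t - s) u)) - A (a (V (t - s) u)))‖ ≤ C * ((n + 1 : ℕ) * s ^ n) := by
    rintro s ⟨hs, hst⟩
    have hexp : Real.exp (ω * t) = Real.exp (ω * s) * Real.exp (ω * |t - s|) := by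
      rw [← Real.exp_add, abs_of_nonneg (sub_nonneg.2 hst.le)]
      ring_nf
    calc _ ≤ ((n + 1 : ℕ) : ℝ) * (c * Real.exp (ω * s) * (c * κ * s) ^ n *
            (κ * (c * Real.exp (ω * |t - s|) * ‖u‖))) := by
          refine norm_nsmul_le.trans ?_
          gcongr
          refine (ih s hs _).trans ?_
          gcongr
          refine (ha _ (hV.apply_mem (t - s) u hu)).2.1.trans ?_
          gcongr
          exact hbound (t - s) u
      _ = C * ((n + 1 : ℕ) * s ^ n) := by
          rw [hC, hexp]
          ring
  have hle := image_norm_le_of_norm_deriv_right_le_deriv_boundary (B := fun s => C * s ^ (n + 1))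
    (fun s _ => (hderiv s).continuousAt.continuousWithinAt)
    (fun s _ => (hderiv s).hasDerivWithinAt)
    (by simp [hV.map_zero, ← ContinuousLinearMap.one_def, iteratedCommutator_one_succ])
    (fun s => by simpa using (hasDerivAt_pow (n + 1) s).const_mul C)
    hderiv_le (Set.right_mem_Icc.2 ht)
  rw [sub_self, hV.map_zero, ContinuousLinearMap.id_apply] at hle
  exact hle.trans_eq (by rw [hC]; ring)

theorem norm_iteratedCommutator_le_of_nonneg (hV : IsC0Group V A S) (hS : Dense (S : Set E))
    (hc : 0 ≤ c) (hκ : 0 ≤ κ) (hbound : ∀ t u, ‖V t u‖ ≤ c * Real.exp (ω * |t|) * ‖u‖)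
    (ha : HasCommutatorBound A S a κ) (n : ℕ) {t : ℝ} (ht : 0 ≤ t) (u : E) :
    ‖iteratedCommutator a (V t) n u‖ ≤ c * Real.exp (ω * t) * (c * κ * t) ^ n * ‖u‖ := by
  induction n generalizing t u with
  | zero => simpa [abs_of_nonneg ht] using hbound t u
  | succ n ih =>
    refine hS.induction (P := fun u => ‖iteratedCommutator a (V t) (n + 1) u‖ ≤
      c * Real.exp (ω * t) * (c * κ * t) ^ (n + 1) * ‖u‖) (fun u hu => ?_)
      (isClosed_le (by fun_prop) (by fun_prop)) u
    exact hV.norm_iteratedCommutator_succ_le hc hκ hbound ha n (fun s hs => ih hs) ht hu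

theorem norm_iteratedCommutator_le (hV : IsC0Group V A S) (hS : Dense (S : Set E))
    (hc : 0 ≤ c) (hκ : 0 ≤ κ) (hbound : ∀ t u, ‖V t u‖ ≤ c * Real.exp (ω * |t|) * ‖u‖)
    (ha : HasCommutatorBound A S a κ) (n : ℕ) (t : ℝ) (u : E) :
    ‖iteratedCommutator a (V t) n u‖ ≤ c * Real.exp (ω * |t|) * (c * κ * |t|) ^ n * ‖u‖ := by
  rcases le_total 0 t with ht | ht
  · simpa [abs_of_nonneg ht] using
      hV.norm_iteratedCommutator_le_of_nonneg hS hc hκ hbound ha n ht u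
  · simpa [abs_of_nonpos ht] using
      hV.neg.norm_iteratedCommutator_le_of_nonneg hS hc hκ (fun s v => by simpa using hbound (-s) v)
        ha.neg n (neg_nonneg.2 ht) u

end IsC0Group

end Group

section MultiplicationOperator

open Filter Topology ENNReal

theorem eq_zero_of_forall_pow_mul_le {x C r R : ℝ} (hx : 0 ≤ x) (hr : 0 ≤ r) (hrR : r < R)
    (h : ∀ n : ℕ, R ^ n * x ≤ C * r ^ n) : x = 0 := by
  have hR : 0 < R := hr.trans_lt hrR
  have hlim : Tendsto (fun n : ℕ => C * (r / R) ^ n) atTop (𝓝 0) := by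
    simpa using (tendsto_pow_atTop_nhds_zero_of_lt_one (by positivity)
      ((div_lt_one hR).2 hrR)).const_mul C
  refine le_antisymm (ge_of_tendsto' hlim fun n => ?_) hx
  rw [div_pow, ← mul_div_assoc, le_div_iff₀ (by positivity), mul_comm]
  exact h n

variable {𝕜 M F : Type*} [RCLike 𝕜] [MeasurableSpace M] {μ : Measure M} [NormedAddCommGroup F]
  [NormedSpace 𝕜 F] {p : ℝ≥0∞} [Fact (1 ≤ p)]

/-- `a` is the multiplication operator `M_g` on `L^p`. This is a relation because `M_g` need not
exist as a bounded operator. -/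
def IsMulOperator (g : M → 𝕜) (a : Lp F p μ →L[𝕜] Lp F p μ) : Prop :=
  ∀ u, a u =ᵐ[μ] fun x => g x • u x

theorem exists_isMulOperator {g : M → 𝕜} (hg : AEStronglyMeasurable g μ) {C : ℝ}
    (hC : ∀ᵐ x ∂μ, ‖g x‖ ≤ C) : ∃ a : Lp F p μ →L[𝕜] Lp F p μ, IsMulOperator g a := by
  have hmem : MemLp g ∞ μ := memLp_top_of_bound hg C hC
  refine ⟨(ContinuousLinearMap.lsmul 𝕜 𝕜).holderL μ ∞ p p (hmem.toLp g), fun u => ?_⟩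
  filter_upwards [(ContinuousLinearMap.lsmul 𝕜 𝕜 (E := F)).coeFn_holder (r := p) (hmem.toLp g) u,
    hmem.coeFn_toLp] with x hx hgx
  rw [ContinuousLinearMap.holderL_apply_apply, hx, hgx, ContinuousLinearMap.lsmul_apply]

namespace IsMulOperator

variable {g : M → 𝕜} {a : Lp F p μ →L[𝕜] Lp F p μ}

theorem pow (ha : IsMulOperator g a) (n : ℕ) : IsMulOperator (g ^ n) (a ^ n) := fun u => by
  induction n with
  | zero => simp
  | succ n ih =>
    rw [pow_succ']
    filter_upwards [ih, ha ((a ^ n) u)] with x hx hax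
    refine hax.trans ?_
    rw [hx, smul_smul, Pi.pow_apply, Pi.pow_apply, pow_succ']

theorem apply_eq_zero (ha : IsMulOperator g a) {u : Lp F p μ}
    (h : ∀ᵐ x ∂μ, g x = 0 ∨ u x = 0) : a u = 0 := by
  refine Lp.ext ?_
  filter_upwards [ha u, h, Lp.coeFn_zero F p μ] with x hax hx hzero
  rw [hax, hzero, Pi.zero_apply, smul_eq_zero]
  exact hx

theorem ae_eq_zero_of_le_norm (ha : IsMulOperator g a) (hg : Measurable g) {w : Lp F p μ}
    {C r R : ℝ} (hr : 0 ≤ r) (hrR : r < R) (h : ∀ n : ℕ, ‖(a ^ n) w‖ ≤ C * r ^ n) :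
    ∀ᵐ x ∂μ, R ≤ ‖g x‖ → w x = 0 := by
  have hR : 0 ≤ R := hr.trans hrR.le
  have hmeas : MeasurableSet {x | R ≤ ‖g x‖} := measurableSet_le measurable_const hg.norm
  have hmem := (Lp.memLp w).indicator hmeas
  set v := hmem.toLp _
  have hpow (n : ℕ) : R ^ n * ‖v‖ ≤ C * r ^ n := by
    refine le_trans ?_ (h n)
    calc R ^ n * ‖v‖ = ‖((R : 𝕜) ^ n) • v‖ := by
          rw [norm_smul, norm_pow, RCLike.norm_of_nonneg hR]
      _ ≤ ‖(a ^ n) w‖ := by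
          refine Lp.norm_le_norm_of_ae_le ?_
          filter_upwards [ha.pow n w, hmem.coeFn_toLp, Lp.coeFn_smul ((R : 𝕜) ^ n) v]
            with x hax hvx hsmul
          rw [hax, hsmul, Pi.smul_apply, hvx, norm_smul, norm_smul, Pi.pow_apply, norm_pow,
            norm_pow, RCLike.norm_of_nonneg hR]
          by_cases hx : R ≤ ‖g x‖
          · rw [Set.indicator_of_mem (by exact hx)]
            gcongr
          · rw [Set.indicator_of_notMem (by exact hx), norm_zero, mul_zero]
            positivity
  have hv : v = 0 := norm_eq_zero.1 (eq_zero_of_forall_pow_mul_le (norm_nonneg v) hr hrR hpow)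
  filter_upwards [hmem.coeFn_toLp, (Lp.eq_zero_iff_ae_eq_zero).1 hv] with x hvx hzero hx
  rwa [← Set.indicator_of_mem (s := {x | R ≤ ‖g x‖}) hx w, ← hvx]

theorem ae_eq_zero_of_lt_norm (ha : IsMulOperator g a) (hg : Measurable g) {w : Lp F p μ}
    {C r : ℝ} (hr : 0 ≤ r) (h : ∀ n : ℕ, ‖(a ^ n) w‖ ≤ C * r ^ n) :
    ∀ᵐ x ∂μ, r < ‖g x‖ → w x = 0 := by
  have hrat : ∀ᵐ x ∂μ, ∀ q : ℚ, r < q → (q : ℝ) ≤ ‖g x‖ → w x = 0 :=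
    ae_all_iff.2 fun q => eventually_imp_distrib_left.2 fun hq =>
      ha.ae_eq_zero_of_le_norm hg hr hq h
  filter_upwards [hrat] with x hx hlt
  obtain ⟨q, hrq, hqg⟩ := exists_rat_btwn hlt
  exact hx q hrq hqg.le

end IsMulOperator

end MultiplicationOperator

theorem finite_propagation_speed_general {𝕜 M F : Type*} [RCLike 𝕜]
    [PseudoMetricSpace M] [MeasurableSpace M] [OpensMeasurableSpace M] {μ : Measure M}
    [NormedAddCommGroup F] [NormedSpace ℝ F] [NormedSpace 𝕜 F] [IsScalarTower ℝ 𝕜 F]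
    {p : ENNReal} [Fact (1 ≤ p)] {V : ℝ → Lp F p μ →L[𝕜] Lp F p μ} {A : Lp F p μ → Lp F p μ}
    {S : Submodule 𝕜 (Lp F p μ)} (hV : IsC0Group V A S) (hS : Dense (S : Set (Lp F p μ)))
    {c ω κ : ℝ} (hc : 0 ≤ c) (hκ : 0 ≤ κ)
    (hbound : ∀ t u, ‖V t u‖ ≤ c * Real.exp (ω * |t|) * ‖u‖)
    (hcomm : ∀ η : M → ℝ, LipschitzWith 1 η → (∃ C, ∀ x, |η x| ≤ C) →
      ∀ a, IsMulOperator (fun x => (η x : 𝕜)) a → HasCommutatorBound A S a κ)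
    {K : Set M} {u : Lp F p μ} (hu : ∀ᵐ x ∂μ, x ∉ K → u x = 0) (t : ℝ) :
    ∀ᵐ x ∂μ, c * κ * |t| < Metric.infDist x K → V t u x = 0 := by
  have hr : 0 ≤ c * κ * |t| := by positivity
  set r := c * κ * |t|
  let η : M → ℝ := fun x => min (Metric.infDist x K) (r + 1)
  have hη_nonneg (x : M) : 0 ≤ η x := le_min Metric.infDist_nonneg (by positivity)
  have hη_lip : LipschitzWith 1 η := (Metric.lipschitz_infDist_pt K).min_const (r + 1)
  have hη_le (x : M) : |η x| ≤ r + 1 := by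
    rw [abs_of_nonneg (hη_nonneg x)]
    exact min_le_right _ _
  have hη_meas : Measurable fun x => (η x : 𝕜) :=
    RCLike.measurable_ofReal.comp hη_lip.continuous.measurable
  obtain ⟨a, ha⟩ := exists_isMulOperator (F := F) (p := p) (μ := μ) hη_meas.aestronglyMeasurable
    (.of_forall fun x => by simpa using hη_le x)
  have hau : a u = 0 := ha.apply_eq_zero <| by
    filter_upwards [hu] with x hux
    refine or_iff_not_imp_right.2 fun hx => ?_
    simp [η, Metric.infDist_zero_of_mem (not_imp_comm.1 hux hx), hr, add_nonneg]
  have hpow (n : ℕ) : ‖(a ^ n) (V t u)‖ ≤ c * Real.exp (ω * |t|) * ‖u‖ * r ^ n := by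
    rw [← iteratedCommutator_apply_of_apply_eq_zero _ hau]
    exact (hV.norm_iteratedCommutator_le hS hc hκ hbound (hcomm η hη_lip ⟨_, hη_le⟩ a ha)
      n t u).trans_eq (mul_right_comm _ _ _)
  filter_upwards [ha.ae_eq_zero_of_lt_norm hη_meas hr hpow] with x hx hlt
  refine hx ?_
  rw [RCLike.norm_of_nonneg (hη_nonneg x)]
  exact lt_min hlt (lt_add_one r)

/-- **Finite propagation speed for first order systems on metric measure spaces**
(McIntosh–Morris, Theorem 2). -/
theorem finite_propagation_speed
    {M : Type*} [MetricSpace M] [MeasurableSpace M] [BorelSpace M]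
    (μ : Measure M) [SigmaFinite μ]
    (m : ℕ) (hm : 1 ≤ m) (p : ENNReal) [hp1 : Fact (1 ≤ p)] (hp2 : p ≠ ⊤)
    (Dom : Submodule ℂ (Lp (EuclideanSpace ℂ (Fin m)) p μ))
    (hdense : Dense (Dom : Set (Lp (EuclideanSpace ℂ (Fin m)) p μ)))
    (D : Lp (EuclideanSpace ℂ (Fin m)) p μ → Lp (EuclideanSpace ℂ (Fin m)) p μ)
    (hDadd : ∀ u ∈ Dom, ∀ v ∈ Dom, D (u + v) = D u + D v)
    (hDsmul : ∀ (a : ℂ), ∀ u ∈ Dom, D (a • u) = a • D u)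
    (V : ℝ → Lp (EuclideanSpace ℂ (Fin m)) p μ →L[ℂ]
      Lp (EuclideanSpace ℂ (Fin m)) p μ)
    (c ω : ℝ) (hc : 1 ≤ c) (hω : 0 ≤ ω)
    (hV0 : V 0 = ContinuousLinearMap.id ℂ _)
    (hVgrp : ∀ s t : ℝ, V (s + t) = (V s).comp (V t))
    (hVcont : ∀ u, Continuous fun t => V t u)
    (hVdom : ∀ t : ℝ, ∀ u ∈ Dom, V t u ∈ Dom)
    (hVderiv : ∀ t : ℝ, ∀ u ∈ Dom,
      HasDerivAt (fun s => V s u) (Complex.I • V t (D u)) t)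
    (hVD : ∀ t : ℝ, ∀ u ∈ Dom, V t (D u) = D (V t u))
    (hVbound : ∀ (t : ℝ) u, ‖V t u‖ ≤ c * Real.exp (ω * |t|) * ‖u‖)
    (κ : ℝ) (hκ : 0 < κ)
    (hcomm : ∀ (η : M → ℝ) (L : NNReal), LipschitzWith L η → (∃ C, ∀ x, |η x| ≤ C) →
      ∀ Mη : Lp (EuclideanSpace ℂ (Fin m)) p μ →L[ℂ]
          Lp (EuclideanSpace ℂ (Fin m)) p μ,
        (∀ u, (Mη u : M → EuclideanSpace ℂ (Fin m))
            =ᵐ[μ] fun x => (η x : ℂ) • (u : M → EuclideanSpace ℂ (Fin m)) x) →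
        ∀ u ∈ Dom, Mη u ∈ Dom ∧
          ‖Mη (D u) - D (Mη u)‖ ≤ κ * L * ‖u‖ ∧
          Mη (Mη (D u)) - (2 : ℂ) • Mη (D (Mη u)) + D (Mη (Mη u)) = 0)
    (K : Set M) (hK : IsClosed K)
    (u : Lp (EuclideanSpace ℂ (Fin m)) p μ)
    (hu : ∀ᵐ x ∂μ, x ∉ K → (u : M → EuclideanSpace ℂ (Fin m)) x = 0)
    (t : ℝ) :
    ∀ᵐ x ∂μ, c * κ * |t| < Metric.infDist x K →
      (V t u : M → EuclideanSpace ℂ (Fin m)) x = 0 := by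
  exact finite_propagation_speed_general (A := I • D)
    ⟨hV0, hVgrp, hVcont, hVdom, fun v hv => by simpa [hV0] using hVderiv 0 v hv⟩ hdense
    (zero_le_one.trans hc) hκ.le hVbound
    (fun η hη hb a ha => by
      simpa using HasCommutatorBound.const_smul (κ := κ)
        (by simpa [HasCommutatorBound] using hcomm η 1 hη hb a ha) I) hu t
end

section
/- Let (M,d) be a metric space with a σ-finite Borel measure μ, let m ≥ 1, 1 ≤ p < ∞, and write X = L^p(μ;ℂ^m). Let D : Dom(D) ⊆ X → X be a densely defined linear operator and let V : ℝ → B(X) be a C₀ group generated by iD. Let η : M → ℝ be a bounded Lipschitz function such that η·u ∈ Dom(D) for all u ∈ Dom(D), and suppose C_η ∈ B(X) satisfies C_η u = η·(Du) − D(η·u) for all u ∈ Dom(D) and commutes with M_η (i.e. η·(C_η u) = C_η(η·u) for all u ∈ X). Define δ(S) := M_η S − S M_η for S ∈ B(X), δ⁰(S) := S, δ^{k+1}(S) := δ(δᵏ(S)). Then for every m₀ ∈ ℕ (m₀ ≥ 0), every t ∈ ℝ, and every u ∈ X, δ^{m₀+1}(V(t))u = i·t·∫₀¹ Σ_{k=0}^{m₀}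 binom(m₀,k) · δ^{m₀−k}(V(st)) C_η δ^k(V((1−s)t)) u ds, where the integral is a Bochner integral in X over s ∈ [0,1]. -/
open MeasureTheory Complex

/-!
Let `A` generate `V` and let `C` extend the commutator `M A - A M`. On the domain of `A`, the
derivative of `r ↦ V(r) M V(t - r) u` is `-V(r) C V(t - r) u`, so integrating over `[0, t]` yields
Duhamel's formula `[M, V(t)] u = ∫₀ᵗ V(r) C V(t - r) u dr`, which extends to all `u` by density.
The remaining `m₀` commutators with `M` pass under the integral. They act on the integrand by the
Leibniz rule, in which `C` behaves as a constant because it commutes with `M`.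
-/

section Leibniz

open Finset

theorem iterate_map_mul_of_leibniz {A F : Type*} [NonUnitalNonAssocSemiring A] [FunLike F A A]
    [AddMonoidHomClass F A A] (d : F) (hd : ∀ a b, d (a * b) = a * d b + d a * b) (a b : A)
    (n : ℕ) :
    d^[n] (a * b) = ∑ ij ∈ antidiagonal n, n.choose ij.1 • (d^[ij.1] a * d^[ij.2] b) := by
  induction n with
  | zero => simp
  | succ n ih =>
    rw [sum_antidiagonal_choose_succ_nsmul (fun i j ↦ d^[i] a * d^[j] b),
      Function.iterate_succ_apply', ih, map_sum, ← sum_add_distrib]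
    refine sum_congr rfl fun ⟨i, j⟩ hij ↦ ?_
    rw [← Nat.choose_symm_of_eq_add (mem_antidiagonal.1 hij).symm, ← smul_add, map_nsmul, hd]
    simp only [Function.iterate_succ_apply']

variable {R : Type*} [Ring R]

theorem iterate_lie_mul (x a b : R) (n : ℕ) :
    (⁅x, ·⁆)^[n] (a * b) =
      ∑ ij ∈ antidiagonal n, n.choose ij.1 • ((⁅x, ·⁆)^[ij.1] a * (⁅x, ·⁆)^[ij.2] b) :=
  iterate_map_mul_of_leibniz (AddMonoidHom.mulLeft x - AddMonoidHom.mulRight x)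
    (fun a b ↦ by
      simp only [AddMonoidHom.sub_apply, AddMonoidHom.coe_mulLeft, AddMonoidHom.coe_mulRight]
      noncomm_ring) a b n

theorem iterate_lie_mul_of_commute {x c : R} (hc : Commute x c) (a : R) (n : ℕ) :
    (⁅x, ·⁆)^[n] (c * a) = c * (⁅x, ·⁆)^[n] a := by
  have semiconj : Function.Semiconj (c * ·) (⁅x, ·⁆) (⁅x, ·⁆) := fun a ↦ by
    simp only [Ring.lie_def, mul_sub, ← mul_assoc, hc.eq]
  exact (semiconj.iterate_right n a).symm

theorem iterate_lie_mul_mul_of_commute {x c : R} (hc : Commute x c) (a b : R) (n : ℕ) :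
    (⁅x, ·⁆)^[n] (a * c * b) =
      ∑ k ∈ range (n + 1), n.choose k • ((⁅x, ·⁆)^[n - k] a * c * (⁅x, ·⁆)^[k] b) := by
  rw [mul_assoc, iterate_lie_mul, ← Nat.sum_antidiagonal_swap,
    Nat.sum_antidiagonal_eq_sum_range_succ_mk]
  refine sum_congr rfl fun k hk ↦ ?_
  simp only [Prod.swap_prod_mk, iterate_lie_mul_of_commute hc, mul_assoc,
    Nat.choose_symm (mem_range_succ_iff.1 hk)]

end Leibniz

section StrongContinuity

open Filter Topology

variable {𝕜 : Type*} [NontriviallyNormedField 𝕜]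
  {E : Type*} [NormedAddCommGroup E] [NormedSpace 𝕜 E] [CompleteSpace E]
  {F : Type*} [NormedAddCommGroup F] [NormedSpace 𝕜 F]

theorem exists_bound_norm_of_continuousOn_apply {T : Type*} [TopologicalSpace T] {K : Set T}
    (hK : IsCompact K) {S : T → E →L[𝕜] F} (hS : ∀ u, ContinuousOn (S · u) K) :
    ∃ B, ∀ s ∈ K, ‖S s‖ ≤ B := by
  obtain ⟨B, hB⟩ := banach_steinhaus (g := fun s : K ↦ S s) fun u ↦
    (hK.exists_bound_of_continuousOn (hS u)).imp fun _ h s ↦ h s s.2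
  exact ⟨B, fun s hs ↦ hB ⟨s, hs⟩⟩

theorem continuous_uncurry_of_continuous_apply {T : Type*} [TopologicalSpace T]
    [WeaklyLocallyCompactSpace T] {S : T → E →L[𝕜] F} (hS : ∀ u, Continuous (S · u)) :
    Continuous fun x : T × E ↦ S x.1 x.2 := by
  refine continuous_iff_continuousAt.2 fun ⟨s, u⟩ ↦ ?_
  obtain ⟨K, hK, hKs⟩ := exists_compact_mem_nhds s
  obtain ⟨B, hB⟩ := exists_bound_norm_of_continuousOn_apply hK fun u ↦ (hS u).continuousOn
  have lipschitz : ∀ r ∈ K, LipschitzOnWith B.toNNReal (S r) Set.univ := fun r hr ↦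
    ((S r).lipschitz.weaken (NNReal.le_toNNReal_of_coe_le (hB r hr))).lipschitzOnWith
  exact (continuousOn_prod_of_continuousOn_lipschitzOnWith' (fun x : T × E ↦ S x.1 x.2) _ lipschitz
    fun u _ ↦ (hS u).continuousOn).continuousAt (prod_mem_nhds hKs univ_mem)

theorem hasDerivAt_apply_of_continuous_apply [WeaklyLocallyCompactSpace 𝕜] {S : 𝕜 → E →L[𝕜] F}
    (hS : ∀ u, Continuous (S · u)) {g : 𝕜 → E} {g' : E} {w : F} {s : 𝕜}
    (hg : HasDerivAt g g' s) (hw : HasDerivAt (S · (g s)) w s) :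
    HasDerivAt (fun r ↦ S r (g r)) (w + S s g') s := by
  rw [hasDerivAt_iff_tendsto_slope] at hg hw ⊢
  have tendsto_apply_slope : Tendsto (fun r ↦ S r (slope g s r)) (𝓝[≠] s) (𝓝 (S s g')) :=
    ((continuous_uncurry_of_continuous_apply hS).tendsto (s, g')).comp
      ((tendsto_id.mono_left nhdsWithin_le_nhds).prodMk_nhds hg)
  refine (hw.add tendsto_apply_slope).congr fun r ↦ ?_
  simp only [slope_def_module, map_smul, map_sub, ← smul_add]
  congr 1
  abel

end StrongContinuity

section StrongIntegral

variable {𝕜 : Type*} [RCLike 𝕜]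
  {X : Type*} [NormedAddCommGroup X] [NormedSpace 𝕜 X] [NormedSpace ℝ X] [CompleteSpace X]

theorem iterate_lie_apply_eq_integral {ν : Measure ℝ} {a b : ℝ} (M : X →L[𝕜] X)
    {S : X →L[𝕜] X} {F : ℝ → X →L[𝕜] X} (hF : ∀ u, IntervalIntegrable (F · u) ν a b)
    (hS : ∀ u, S u = ∫ s in a..b, F s u ∂ν) (n : ℕ) (u : X) :
    ((⁅M, ·⁆)^[n] S) u = ∫ s in a..b, ((⁅M, ·⁆)^[n] (F s)) u ∂ν := by
  induction n generalizing S F u with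
  | zero => exact hS u
  | succ _ ih =>
    have hMF (u : X) : IntervalIntegrable (fun s ↦ M (F s u)) ν a b :=
      ⟨M.integrable_comp (hF u).1, M.integrable_comp (hF u).2⟩
    refine ih (fun u ↦ (hMF u).sub (hF (M u))) (fun u ↦ ?_) u
    calc ⁅M, S⁆ u = M (S u) - S (M u) := rfl
      _ = (∫ s in a..b, M (F s u) ∂ν) - ∫ s in a..b, F s (M u) ∂ν := by
        rw [hS u, hS (M u), M.intervalIntegral_comp_comm (hF u)]
      _ = ∫ s in a..b, ⁅M, F s⁆ u ∂ν :=
        (intervalIntegral.integral_sub (hMF u) (hF (M u))).symm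

end StrongIntegral

section C0Group

variable {𝕜 : Type*} [RCLike 𝕜]
  {X : Type*} [NormedAddCommGroup X] [NormedSpace 𝕜 X] [NormedSpace ℝ X]

/-- The C₀ group `V` on `X` is generated by the operator `A` with domain `Dom`. The operator is
encoded as a total function, of which only the values on `Dom` are meaningful. -/
structure IsC0GroupGeneratedBy (Dom : Submodule 𝕜 X) (A : X → X) (V : ℝ → X →L[𝕜] X) : Prop where
  map_zero : V 0 = 1
  map_add : ∀ s t, V (s + t) = V s * V t
  continuous : ∀ u, Continuous (V · u)
  apply_mem : ∀ t, ∀ u ∈ Dom, V t u ∈ Dom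
  hasDerivAt : ∀ t, ∀ u ∈ Dom, HasDerivAt (V · u) (V t (A u)) t
  apply_generator : ∀ t, ∀ u ∈ Dom, V t (A u) = A (V t u)

namespace IsC0GroupGeneratedBy

variable [CompleteSpace X]
  {Dom : Submodule 𝕜 X} {A : X → X} {V : ℝ → X →L[𝕜] X} {M C : X →L[𝕜] X}

theorem continuous_apply_apply_sub (hV : IsC0GroupGeneratedBy Dom A V) (C : X →L[𝕜] X) (t : ℝ) :
    Continuous (Function.uncurry fun u r ↦ V r (C (V (t - r) u))) := by
  have hVc := continuous_uncurry_of_continuous_apply hV.continuous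
  exact hVc.comp (continuous_snd.prodMk (C.continuous.comp
    (hVc.comp ((continuous_const.sub continuous_snd).prodMk continuous_fst))))

variable [IsScalarTower ℝ 𝕜 X]

theorem hasDerivAt_apply_apply_sub (hV : IsC0GroupGeneratedBy Dom A V)
    (hM : ∀ u ∈ Dom, M u ∈ Dom) (hC : ∀ u ∈ Dom, C u = M (A u) - A (M u)) (t r : ℝ)
    {u : X} (hu : u ∈ Dom) :
    HasDerivAt (fun r ↦ V r (M (V (t - r) u))) (-V r (C (V (t - r) u))) r := by
  set w := V (t - r) u with hw
  have hwDom : w ∈ Dom := hV.apply_mem _ u hu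
  have inner : HasDerivAt (fun r ↦ V (t - r) u) (-A w) r := by
    rw [hw, ← hV.apply_generator _ u hu]
    exact (hV.hasDerivAt (t - r) u hu).comp_const_sub t r
  have middle : HasDerivAt (fun r ↦ M (V (t - r) u)) (M (-A w)) r :=
    (M.restrictScalars ℝ).hasFDerivAt.comp_hasDerivAt r inner
  have product := hasDerivAt_apply_of_continuous_apply (S := fun r ↦ (V r).restrictScalars ℝ)
    hV.continuous middle (hV.hasDerivAt r (M w) (hM w hwDom))
  have deriv_eq : V r (A (M w)) + V r (M (-A w)) = -V r (C w) := by
    simp only [hC w hwDom, map_neg, map_sub]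
    abel
  exact deriv_eq ▸ product

theorem lie_apply_eq_integral (hV : IsC0GroupGeneratedBy Dom A V) (hDom : Dense (Dom : Set X))
    (hM : ∀ u ∈ Dom, M u ∈ Dom) (hC : ∀ u ∈ Dom, C u = M (A u) - A (M u)) (t : ℝ) (u : X) :
    ⁅M, V t⁆ u = ∫ r in 0..t, V r (C (V (t - r) u)) := by
  have hcont := hV.continuous_apply_apply_sub C t
  refine congrFun (Continuous.ext_on hDom (f := (⁅M, V t⁆ : X →L[𝕜] X))
    (ContinuousLinearMap.continuous _)
    (intervalIntegral.continuous_parametric_intervalIntegral_of_continuous' hcont 0 t) ?_) u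
  intro u hu
  have integral_deriv := intervalIntegral.integral_eq_sub_of_hasDerivAt
    (fun r _ ↦ hV.hasDerivAt_apply_apply_sub hM hC t r hu)
    ((hcont.comp (Continuous.prodMk_right u)).neg.intervalIntegrable 0 t)
  calc ⁅M, V t⁆ u = M (V t u) - V t (M u) := rfl
    _ = -∫ r in 0..t, -V r (C (V (t - r) u)) := by
      simp [integral_deriv, hV.map_zero]
    _ = ∫ r in 0..t, V r (C (V (t - r) u)) := by
      rw [intervalIntegral.integral_neg, neg_neg]

theorem iterate_lie_succ_apply_eq_integral (hV : IsC0GroupGeneratedBy Dom A V)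
    (hDom : Dense (Dom : Set X)) (hM : ∀ u ∈ Dom, M u ∈ Dom)
    (hC : ∀ u ∈ Dom, C u = M (A u) - A (M u)) (hMC : Commute M C) (n : ℕ) (t : ℝ) (u : X) :
    ((⁅M, ·⁆)^[n + 1] (V t)) u = ∫ r in 0..t, ∑ k ∈ Finset.range (n + 1),
      (n.choose k : 𝕜) • ((⁅M, ·⁆)^[n - k] (V r)) (C (((⁅M, ·⁆)^[k] (V (t - r))) u)) := by
  have hint (u : X) : IntervalIntegrable (fun r ↦ (V r * C * V (t - r)) u) volume 0 t :=
    ((hV.continuous_apply_apply_sub C t).comp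
      (Continuous.prodMk_right u)).intervalIntegrable 0 t
  rw [Function.iterate_succ_apply, iterate_lie_apply_eq_integral M hint
    (hV.lie_apply_eq_integral hDom hM hC t)]
  refine intervalIntegral.integral_congr fun r _ ↦ ?_
  simp [iterate_lie_mul_mul_of_commute hMC, sum_apply, Nat.cast_smul_eq_nsmul]

end IsC0GroupGeneratedBy

theorem higher_commutator_formula_general [IsScalarTower ℝ 𝕜 X] [CompleteSpace X]
    {Dom : Submodule 𝕜 X} (hDom : Dense (Dom : Set X)) {D : X → X} {c : 𝕜} {V : ℝ → X →L[𝕜] X}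
    (hV : IsC0GroupGeneratedBy Dom (c • D) V) {M C : X →L[𝕜] X} (hM : ∀ u ∈ Dom, M u ∈ Dom)
    (hC : ∀ u ∈ Dom, C u = M (D u) - D (M u)) (hMC : Commute M C) (n : ℕ) (t : ℝ) (u : X) :
    ((⁅M, ·⁆)^[n + 1] (V t)) u =
      (c * (t : 𝕜)) • ∫ s in (0 : ℝ)..1, ∑ k ∈ Finset.range (n + 1), (n.choose k : 𝕜) •
        ((⁅M, ·⁆)^[n - k] (V (s * t))) (C (((⁅M, ·⁆)^[k] (V ((1 - s) * t))) u)) := by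
  have hcC : ∀ u ∈ Dom, (c • C) u = M ((c • D) u) - (c • D) (M u) := fun u hu ↦ by
    simp [hC u hu, smul_sub]
  rw [hV.iterate_lie_succ_apply_eq_integral hDom hM hcC (hMC.smul_right c), mul_comm, mul_smul,
    ← intervalIntegral.integral_smul, ← RCLike.real_smul_eq_coe_smul]
  set f := fun r ↦ ∑ k ∈ Finset.range (n + 1), (n.choose k : 𝕜) •
    ((⁅M, ·⁆)^[n - k] (V r)) ((c • C) (((⁅M, ·⁆)^[k] (V (t - r))) u)) with hf
  calc ∫ r in 0..t, f r = t • ∫ s in (0 : ℝ)..1, f (s * t) := by simp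
    _ = _ := by
      simp only [hf, sub_mul, one_mul, smul_apply, map_smul, Finset.smul_sum, smul_comm c]

end C0Group

/-- **Higher commutator formula** (McIntosh–Morris, equation (3.5)):
`δ^{m₀+1}(e^{itD})u = it ∫₀¹ Σ_k binom(m₀,k) δ^{m₀-k}(e^{istD}) C_η δ^k(e^{i(1-s)tD}) u ds`. -/
theorem higher_commutator_formula
    {M : Type*} [MetricSpace M] [MeasurableSpace M] [BorelSpace M]
    (μ : Measure M) [SigmaFinite μ]
    (m : ℕ) (hm : 1 ≤ m) (p : ENNReal) [hp1 : Fact (1 ≤ p)] (hp2 : p ≠ ⊤)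
    (Dom : Submodule ℂ (Lp (EuclideanSpace ℂ (Fin m)) p μ))
    (hdense : Dense (Dom : Set (Lp (EuclideanSpace ℂ (Fin m)) p μ)))
    (D : Lp (EuclideanSpace ℂ (Fin m)) p μ → Lp (EuclideanSpace ℂ (Fin m)) p μ)
    (hDadd : ∀ u ∈ Dom, ∀ v ∈ Dom, D (u + v) = D u + D v)
    (hDsmul : ∀ (a : ℂ), ∀ u ∈ Dom, D (a • u) = a • D u)
    (V : ℝ → Lp (EuclideanSpace ℂ (Fin m)) p μ →L[ℂ]
      Lp (EuclideanSpace ℂ (Fin m)) p μ)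
    (hV0 : V 0 = ContinuousLinearMap.id ℂ _)
    (hVgrp : ∀ s t : ℝ, V (s + t) = (V s).comp (V t))
    (hVcont : ∀ u, Continuous fun t => V t u)
    (hVdom : ∀ t : ℝ, ∀ u ∈ Dom, V t u ∈ Dom)
    (hVderiv : ∀ t : ℝ, ∀ u ∈ Dom,
      HasDerivAt (fun s => V s u) (Complex.I • V t (D u)) t)
    (hVD : ∀ t : ℝ, ∀ u ∈ Dom, V t (D u) = D (V t u))
    (η : M → ℝ) (L : NNReal) (hηLip : LipschitzWith L η) (hηbdd : ∃ C, ∀ x, |η x| ≤ C)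
    (Mη : Lp (EuclideanSpace ℂ (Fin m)) p μ →L[ℂ] Lp (EuclideanSpace ℂ (Fin m)) p μ)
    (hMη : ∀ u, (Mη u : M → EuclideanSpace ℂ (Fin m))
      =ᵐ[μ] fun x => (η x : ℂ) • (u : M → EuclideanSpace ℂ (Fin m)) x)
    (hMηdom : ∀ u ∈ Dom, Mη u ∈ Dom)
    (Cη : Lp (EuclideanSpace ℂ (Fin m)) p μ →L[ℂ] Lp (EuclideanSpace ℂ (Fin m)) p μ)
    (hCη : ∀ u ∈ Dom, Cη u = Mη (D u) - D (Mη u))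
    (hCηMη : ∀ u, Mη (Cη u) = Cη (Mη u))
    (m₀ : ℕ) (t : ℝ) (u : Lp (EuclideanSpace ℂ (Fin m)) p μ) :
    ((fun T => Mη.comp T - T.comp Mη)^[m₀ + 1] (V t)) u =
      (Complex.I * (t : ℂ)) •
        ∫ s in (0:ℝ)..1, ∑ k ∈ Finset.range (m₀ + 1),
          (Nat.choose m₀ k : ℂ) •
            ((fun T => Mη.comp T - T.comp Mη)^[m₀ - k] (V (s * t)))
              (Cη (((fun T => Mη.comp T - T.comp Mη)^[k] (V ((1 - s) * t))) u)) := by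
  have hV : IsC0GroupGeneratedBy Dom (Complex.I • D) V :=
    ⟨hV0, hVgrp, hVcont, hVdom, fun t u hu ↦ by simpa using hVderiv t u hu,
      fun t u hu ↦ by simp [hVD t u hu]⟩
  exact higher_commutator_formula_general hdense hV hMηdom hCη
    (ContinuousLinearMap.ext hCηMη) m₀ t u
end
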